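/- Let d be a positive natural number, L ≥ 0, μ a probability measure on ℝ^d, and v : ℝ^d × [0,1] → ℝ^d such that for each s ∈ [0,1] the map v_s := v(·, s) is differentiable with Fréchet derivative Dv_s, and z ↦ Dv_s(z) is L-Lipschitz with respect to the operator norm, uniformly in s. Define the alignment loss L_align(y) := ∫_{s ∈ [0,1]} ∫_{ℝ^d} ‖(y − x₀) − v((1−s)·x₀ + s·y, s)‖² dμ(x₀) ds and C(y) := −∫_{s ∈ [0,1]} ∫_{ℝ^d} tr(Dv_s((1−s)·x₀ + s·y)) dμ(x₀) ds, and assume that for y₁ and y₂ both integrands are integrable with respect to the product of Lebesgue measure on [0,1] and μ. If L_align(y₁) − L_align(y₂) > (L · d / 2) · ‖y₁ − y₂‖, then C(y₂) − L_align(y₂) > C(y₁) − L_align(y₁), i.e. the variational lower bound C(y) − L_align(y) is strictly larger at y₂ than at y₁. -/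

import Mathlib

open MeasureTheory

/-!
It suffices to bound the change of `C`. The trace of an operator on a `d`-dimensional inner product
space is `d`-Lipschitz, so `z ↦ tr (Dv_s z)` is `L d`-Lipschitz. The points `(1 - s) x₀ + s y₁` and
`(1 - s) x₀ + s y₂` are at distance `s ‖y₁ - y₂‖`, and `∫₀¹ s ds = 1/2` turns this into the
Lipschitz constant `L d / 2` for `C`.
-/

open Module (finrank)
open scoped NNReal

section Trace

variable {𝕜 E : Type*} [RCLike 𝕜] [NormedAddCommGroup E] [InnerProductSpace 𝕜 E]
  [FiniteDimensional 𝕜 E]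

theorem norm_trace_le_finrank_mul_opNorm (A : E →L[𝕜] E) :
    ‖LinearMap.trace 𝕜 E (A : E →ₗ[𝕜] E)‖ ≤ finrank 𝕜 E * ‖A‖ := by
  let b := stdOrthonormalBasis 𝕜 E
  have entry_le (i) : ‖inner 𝕜 (b i) (A (b i))‖ ≤ ‖A‖ := by
    calc ‖inner 𝕜 (b i) (A (b i))‖ ≤ ‖b i‖ * ‖A (b i)‖ := norm_inner_le_norm _ _
      _ ≤ ‖b i‖ * (‖A‖ * ‖b i‖) := by gcongr; exact A.le_opNorm _
      _ = ‖A‖ := by rw [b.norm_eq_one, one_mul, mul_one]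
  calc ‖LinearMap.trace 𝕜 E (A : E →ₗ[𝕜] E)‖
      = ‖∑ i, inner 𝕜 (b i) (A (b i))‖ := by rw [LinearMap.trace_eq_sum_inner _ b]; rfl
    _ ≤ ∑ _ : Fin (finrank 𝕜 E), ‖A‖ := norm_sum_le_of_le _ fun i _ ↦ entry_le i
    _ = finrank 𝕜 E * ‖A‖ := by rw [Fin.sum_const, nsmul_eq_mul]

theorem lipschitzWith_trace :
    LipschitzWith (finrank 𝕜 E) fun A : E →L[𝕜] E ↦ LinearMap.trace 𝕜 E (A : E →ₗ[𝕜] E) :=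
  .of_dist_le_mul fun A B ↦ by
    simpa only [dist_eq_norm, NNReal.coe_natCast, map_sub, ContinuousLinearMap.toLinearMap_sub]
      using norm_trace_le_finrank_mul_opNorm (A - B)

end Trace

theorem dist_comp_interpolation_le {E X : Type*} [SeminormedAddCommGroup E] [NormedSpace ℝ E]
    [PseudoMetricSpace X] {K : ℝ≥0} {f : E → X} (hf : LipschitzWith K f) {s : ℝ} (hs : 0 ≤ s)
    (x y₁ y₂ : E) :
    dist (f ((1 - s) • x + s • y₁)) (f ((1 - s) • x + s • y₂)) ≤ K * dist y₁ y₂ * s := by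
  calc dist (f ((1 - s) • x + s • y₁)) (f ((1 - s) • x + s • y₂))
      ≤ K * dist ((1 - s) • x + s • y₁) ((1 - s) • x + s • y₂) := hf.dist_le_mul _ _
    _ = K * dist y₁ y₂ * s := by
      rw [dist_add_left, dist_smul₀, Real.norm_of_nonneg hs]
      ring

theorem setIntegral_Icc_zero_one_id : ∫ s in Set.Icc (0 : ℝ) 1, s = 1 / 2 := by
  rw [integral_Icc_eq_integral_Ioc, ← intervalIntegral.integral_of_le zero_le_one, integral_id]
  norm_num

section InterpolationMean

variable {E F : Type*} [SeminormedAddCommGroup E] [NormedSpace ℝ E] [MeasurableSpace E]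
  [NormedAddCommGroup F] [NormedSpace ℝ F]

/-- The mean of a time-dependent field `g` along the straight paths `s ↦ (1 - s) x₀ + s y` from a
random source `x₀ ∼ μ` to the target `y`. With `g s z = tr (Dv_s z)` it is `-C y`. -/
noncomputable def interpolationMean (μ : Measure E) (g : ℝ → E → F) (y : E) : F :=
  ∫ s in Set.Icc (0 : ℝ) 1, ∫ x₀, g s ((1 - s) • x₀ + s • y) ∂μ

/-- Joint integrability, in time and source, of the integrand of `interpolationMean μ g y`. -/
def InterpolationIntegrable (μ : Measure E) (g : ℝ → E → F) (y : E) : Prop :=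
  Integrable (fun p : ℝ × E ↦ g p.1 ((1 - p.1) • p.2 + p.1 • y))
    ((volume.restrict (Set.Icc (0 : ℝ) 1)).prod μ)

theorem dist_interpolationMean_le {μ : Measure E} [IsProbabilityMeasure μ] {K : ℝ≥0}
    {g : ℝ → E → F} (hg : ∀ s ∈ Set.Icc (0 : ℝ) 1, LipschitzWith K (g s)) {y₁ y₂ : E}
    (h₁ : InterpolationIntegrable μ g y₁) (h₂ : InterpolationIntegrable μ g y₂) :
    dist (interpolationMean μ g y₁) (interpolationMean μ g y₂) ≤ K / 2 * dist y₁ y₂ := by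
  let ν : Measure (ℝ × E) := (volume.restrict (Set.Icc (0 : ℝ) 1)).prod μ
  have time_integrable : IntegrableOn (fun s : ℝ ↦ s) (Set.Icc 0 1) :=
    continuous_id.integrableOn_Icc
  have time_mem : ∀ᵐ p ∂ν, p.1 ∈ Set.Icc (0 : ℝ) 1 :=
    Measure.quasiMeasurePreserving_fst.ae (ae_restrict_mem measurableSet_Icc)
  calc dist (interpolationMean μ g y₁) (interpolationMean μ g y₂)
      = ‖∫ p, (g p.1 ((1 - p.1) • p.2 + p.1 • y₁) - g p.1 ((1 - p.1) • p.2 + p.1 • y₂)) ∂ν‖ := by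
        rw [integral_sub h₁ h₂, integral_prod _ h₁, integral_prod _ h₂, dist_eq_norm]
        rfl
    _ ≤ ∫ p, K * dist y₁ y₂ * p.1 ∂ν := by
        refine norm_integral_le_of_norm_le ((time_integrable.comp_fst μ).const_mul _) ?_
        filter_upwards [time_mem] with p hp
        rw [← dist_eq_norm]
        exact dist_comp_interpolation_le (hg p.1 hp) hp.1 p.2 y₁ y₂
    _ = K / 2 * dist y₁ y₂ := by
        rw [integral_const_mul, integral_fun_fst (fun s : ℝ ↦ s), probReal_univ, one_smul,
          setIntegral_Icc_zero_one_id]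
        ring

end InterpolationMean

section ELBO

variable {E : Type*} [NormedAddCommGroup E] [InnerProductSpace ℝ E]

/-- The pointwise trace of a time-dependent field of operators; for `A = Dv` it is the divergence
of the velocity field. -/
noncomputable def traceField (A : ℝ → E → E →L[ℝ] E) (s : ℝ) (z : E) : ℝ :=
  LinearMap.trace ℝ E (A s z : E →ₗ[ℝ] E)

variable [FiniteDimensional ℝ E] [MeasurableSpace E] {μ : Measure E} [IsProbabilityMeasure μ]
  {K : ℝ≥0} {A : ℝ → E → E →L[ℝ] E} {y₁ y₂ : E}

theorem dist_interpolationMean_traceField_le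
    (hA : ∀ s ∈ Set.Icc (0 : ℝ) 1, LipschitzWith K (A s))
    (h₁ : InterpolationIntegrable μ (traceField A) y₁)
    (h₂ : InterpolationIntegrable μ (traceField A) y₂) :
    dist (interpolationMean μ (traceField A) y₁) (interpolationMean μ (traceField A) y₂) ≤
      K * finrank ℝ E / 2 * dist y₁ y₂ := by
  have trace_lipschitz (s) (hs : s ∈ Set.Icc (0 : ℝ) 1) :
      LipschitzWith (K * finrank ℝ E) (traceField A s) :=
    mul_comm K (finrank ℝ E : ℝ≥0) ▸ lipschitzWith_trace.comp (hA s hs)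
  simpa only [NNReal.coe_mul, NNReal.coe_natCast]
    using dist_interpolationMean_le trace_lipschitz h₁ h₂

theorem elbo_monotonic_general (hA : ∀ s ∈ Set.Icc (0 : ℝ) 1, LipschitzWith K (A s))
    (loss : E → ℝ) (h₁ : InterpolationIntegrable μ (traceField A) y₁)
    (h₂ : InterpolationIntegrable μ (traceField A) y₂)
    (hgap : K * finrank ℝ E / 2 * dist y₁ y₂ < loss y₁ - loss y₂) :
    -interpolationMean μ (traceField A) y₁ - loss y₁ <
      -interpolationMean μ (traceField A) y₂ - loss y₂ := by
  have trace_change := dist_interpolationMean_traceField_le hA h₁ h₂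
  rw [Real.dist_eq, abs_sub_le_iff] at trace_change
  linarith [trace_change.2]

end ELBO

/-- (Monotonic behavior of the ELBO.) If the alignment loss at `y₁`
exceeds that at `y₂` by more than `(L·d/2)·‖y₁ - y₂‖`, then the variational lower
bound `C(y) - L_align(y)` is strictly larger at `y₂` than at `y₁`. -/
theorem elbo_monotonic (d : ℕ) (hd : 0 < d) (L : ℝ) (hL : 0 ≤ L)
    (μ : Measure (EuclideanSpace ℝ (Fin d))) [IsProbabilityMeasure μ]
    (v : EuclideanSpace ℝ (Fin d) → ℝ → EuclideanSpace ℝ (Fin d))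
    (Dv : ℝ → EuclideanSpace ℝ (Fin d) →
      (EuclideanSpace ℝ (Fin d) →L[ℝ] EuclideanSpace ℝ (Fin d)))
    (hdiff : ∀ s ∈ Set.Icc (0 : ℝ) 1, ∀ z, HasFDerivAt (fun z => v z s) (Dv s z) z)
    (hLip : ∀ s ∈ Set.Icc (0 : ℝ) 1, LipschitzWith (Real.toNNReal L) (Dv s))
    (Lalign C : EuclideanSpace ℝ (Fin d) → ℝ)
    (hLalign : ∀ y, Lalign y =
      ∫ s in Set.Icc (0 : ℝ) 1, ∫ x₀,
        ‖(y - x₀) - v ((1 - s) • x₀ + s • y) s‖ ^ 2 ∂μ)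
    (hC : ∀ y, C y =
      -∫ s in Set.Icc (0 : ℝ) 1, ∫ x₀,
        LinearMap.trace ℝ (EuclideanSpace ℝ (Fin d))
          (Dv s ((1 - s) • x₀ + s • y) :
            EuclideanSpace ℝ (Fin d) →ₗ[ℝ] EuclideanSpace ℝ (Fin d)) ∂μ)
    (y₁ y₂ : EuclideanSpace ℝ (Fin d))
    (hint_align : ∀ y ∈ ({y₁, y₂} : Set (EuclideanSpace ℝ (Fin d))),
      Integrable
        (fun p : ℝ × EuclideanSpace ℝ (Fin d) =>
          ‖(y - p.2) - v ((1 - p.1) • p.2 + p.1 • y) p.1‖ ^ 2)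
        ((volume.restrict (Set.Icc (0 : ℝ) 1)).prod μ))
    (hint_trace : ∀ y ∈ ({y₁, y₂} : Set (EuclideanSpace ℝ (Fin d))),
      Integrable
        (fun p : ℝ × EuclideanSpace ℝ (Fin d) =>
          LinearMap.trace ℝ (EuclideanSpace ℝ (Fin d))
            (Dv p.1 ((1 - p.1) • p.2 + p.1 • y) :
              EuclideanSpace ℝ (Fin d) →ₗ[ℝ] EuclideanSpace ℝ (Fin d)))
        ((volume.restrict (Set.Icc (0 : ℝ) 1)).prod μ))
    (hgap : Lalign y₁ - Lalign y₂ > L * d / 2 * ‖y₁ - y₂‖) :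
    C y₂ - Lalign y₂ > C y₁ - Lalign y₁ := by
  rw [hC, hC]
  refine elbo_monotonic_general hLip Lalign (hint_trace y₁ (.inl rfl)) (hint_trace y₂ (.inr rfl)) ?_
  rwa [Real.coe_toNNReal L hL, finrank_euclideanSpace_fin, dist_eq_norm]
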